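/- Let ρ be a complex n×n density matrix (positive semidefinite with trace 1), and let U, V be commuting Hermitian involutions (U² = V² = 1, U*V = V*U, U and V Hermitian). If Tr(ρ*U) = u with u ∈ {−1, 1} and Tr(ρ*V) = v with v ∈ {−1, 1}, then Tr(ρ*(U*V)) = u·v. -/

import Mathlib

/-!
Write `ρ = Bᴴ * B`. For a Hermitian involution `U` and a sign `u`, the squared Frobenius norm of
`B * U - u • B` equals
`2 * (Tr ρ - u * Tr (ρ * U))`, so it vanishes as soon as `Tr (ρ * U) = u * Tr ρ`.
Hence `B * U = u • B` and `ρ * U = u • ρ`: the state is supported on the `u`-eigenspace of `U`.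
Multiplicativity follows, since `Tr (ρ * U * V) = u * Tr (ρ * V)`.
-/

open Matrix ComplexOrder

open scoped MatrixOrder Matrix.Norms.L2Operator in
/-- A positive semidefinite matrix for which a Hermitian involution has extreme expectation is
supported on the corresponding eigenspace. -/
lemma mul_involution_eq_smul {n : Type*} [Fintype n] [DecidableEq n]
    {ρ U : Matrix n n ℂ} (hρ : ρ.PosSemidef) (hUH : Uᴴ = U) (hU2 : U * U = 1)
    {u : ℝ} (hu : u = 1 ∨ u = -1) (htr : (ρ * U).trace = (u : ℂ) * ρ.trace) :
    ρ * U = (u : ℂ) • ρ := by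
  obtain ⟨B, rfl⟩ := CStarAlgebra.nonneg_iff_eq_star_mul_self.mp hρ.nonneg
  rw [Matrix.star_eq_conjTranspose] at *
  have huu : (u : ℂ) * u = 1 := by rcases hu with rfl | rfl <;> simp
  have hBU : (B * U * Bᴴ).trace = (u : ℂ) * (B * Bᴴ).trace := by
    rw [Matrix.trace_mul_comm (B * U), ← Matrix.mul_assoc, htr, Matrix.trace_mul_comm Bᴴ B]
  have hBUU : B * U * (U * Bᴴ) = B * Bᴴ := by
    rw [Matrix.mul_assoc, ← Matrix.mul_assoc U U, hU2, Matrix.one_mul]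
  have hD : B * U - (u : ℂ) • B = 0 := by
    rw [← Matrix.trace_mul_conjTranspose_self_eq_zero_iff]
    have hstar : (B * U - (u : ℂ) • B)ᴴ = U * Bᴴ - (u : ℂ) • Bᴴ := by
      simp [Matrix.conjTranspose_sub, Matrix.conjTranspose_mul, Matrix.conjTranspose_smul, hUH]
    rw [hstar, Matrix.sub_mul, Matrix.mul_sub, Matrix.mul_sub, hBUU]
    simp only [Matrix.smul_mul, Matrix.mul_smul, Matrix.trace_sub, Matrix.trace_smul,
      smul_eq_mul, ← Matrix.mul_assoc, hBU]
    linear_combination (-(B * Bᴴ).trace) * huu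
  rw [Matrix.mul_assoc, sub_eq_zero.mp hD, Matrix.mul_smul]

/-- **Multiplicativity of expectation values of commuting involutions with extreme
expectation.**  If `ρ` is a density matrix, `U, V` are commuting Hermitian involutions,
`Tr(ρU) = u ∈ {−1,1}` and `Tr(ρV) = v ∈ {−1,1}`, then `Tr(ρUV) = uv`. -/
theorem trace_mul_involutions_of_extreme {n : Type*} [Fintype n] [DecidableEq n]
    (ρ U V : Matrix n n ℂ)
    (hρ : ρ.PosSemidef) (hρtr : Matrix.trace ρ = 1)
    (hUH : Uᴴ = U) (hVH : Vᴴ = V)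
    (hU2 : U * U = 1) (hV2 : V * V = 1)
    (hUV : U * V = V * U)
    (u v : ℝ) (hu : u = 1 ∨ u = -1) (hv : v = 1 ∨ v = -1)
    (htrU : Matrix.trace (ρ * U) = (u : ℂ))
    (htrV : Matrix.trace (ρ * V) = (v : ℂ)) :
    Matrix.trace (ρ * (U * V)) = ((u * v : ℝ) : ℂ) := by
  have h : ρ * U = (u : ℂ) • ρ :=
    mul_involution_eq_smul hρ hUH hU2 hu (by rw [htrU, hρtr, mul_one])
  rw [← Matrix.mul_assoc, h, Matrix.smul_mul, Matrix.trace_smul, htrV, smul_eq_mul,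
    Complex.ofReal_mul]
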